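/- For all dimension vectors d, e and positive integers k, one has k·ext(d, e) = ext(d, k·e) = ext(k·d, e), where ext(d,e) := max over generic subdimension vectors d' ↪ d of −⟨d', e⟩, and equivalently max over generic quotients e ↪ e' of −⟨d, e − e'⟩. -/

import Mathlib

open scoped BigOperators

/-- A representation of a quiver with vertex set `Q0` and arrow set `Q1`
(with source and target maps `s t : Q1 → Q0`) over a field `k`:
a finite-dimensional `k`-vector space at each vertex and a linear map for each arrow. -/
structure QRep (k : Type) [Field k] {Q0 Q1 : Type} (s t : Q1 → Q0) where
  V : Q0 → Type
  [addgrp : ∀ i, AddCommGroup (V i)]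
  [mod : ∀ i, Module k (V i)]
  [fd : ∀ i, FiniteDimensional k (V i)]
  hom : ∀ a : Q1, V (s a) →ₗ[k] V (t a)

attribute [instance] QRep.addgrp QRep.mod QRep.fd

namespace QRep

variable {k : Type} [Field k] {Q0 Q1 : Type} {s t : Q1 → Q0}

/-- The dimension vector of a representation. -/
noncomputable def dimVec (M : QRep k s t) : Q0 → ℕ := fun i => Module.finrank k (M.V i)

/-- A family of subspaces is a subrepresentation if it is invariant under all arrow maps. -/
def IsSubrep (M : QRep k s t) (U : ∀ i, Submodule k (M.V i)) : Prop :=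
  ∀ a : Q1, ∀ x ∈ U (s a), M.hom a x ∈ U (t a)

/-- The dimension vector of a family of subspaces. -/
noncomputable def subDim (M : QRep k s t) (U : ∀ i, Submodule k (M.V i)) : Q0 → ℕ :=
  fun i => Module.finrank k (U i)

/-- The subrepresentation determined by an invariant family of subspaces. -/
def subRep (M : QRep k s t) (U : ∀ i, Submodule k (M.V i)) (h : M.IsSubrep U) :
    QRep k s t where
  V := fun i => U i
  hom := fun a => (M.hom a).restrict (fun x hx => h a x hx)

/-- The quotient representation by an invariant family of subspaces. -/
def quotRep (M : QRep k s t) (U : ∀ i, Submodule k (M.V i)) (h : M.IsSubrep U) :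
    QRep k s t where
  V := fun i => M.V i ⧸ U i
  hom := fun a => (U (s a)).mapQ (U (t a)) (M.hom a) (fun x hx => h a x hx)

/-- Direct sum of two representations. -/
def dsum (M N : QRep k s t) : QRep k s t where
  V := fun i => M.V i × N.V i
  hom := fun a => (M.hom a).prodMap (N.hom a)

variable [Fintype Q0]

/-- The pairing `θ(d) = θ · d` of a stability parameter with a dimension vector. -/
def pair (θ : Q0 → ℝ) (d : Q0 → ℕ) : ℝ := ∑ i, θ i * (d i : ℝ)

/-- `θ`-semistability: `θ(M) = 0` and `θ(M') ≤ 0` for all subrepresentations. -/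
def Semistable (θ : Q0 → ℝ) (M : QRep k s t) : Prop :=
  pair θ M.dimVec = 0 ∧
    ∀ U : ∀ i, Submodule k (M.V i), M.IsSubrep U → pair θ (M.subDim U) ≤ 0

/-- `θ`-stability: `θ(M) = 0` and `θ(M') < 0` for all proper nonzero subrepresentations. -/
def Stable (θ : Q0 → ℝ) (M : QRep k s t) : Prop :=
  pair θ M.dimVec = 0 ∧
    ∀ U : ∀ i, Submodule k (M.V i), M.IsSubrep U →
      U ≠ (fun _ => ⊥) → U ≠ (fun _ => ⊤) → pair θ (M.subDim U) < 0

end QRep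

section Defs

variable (k : Type) [Field k] {Q0 Q1 : Type} (s t : Q1 → Q0)

/-- `e` is a generic subdimension vector of `d` (Schofield's characterization as definition):
every representation of dimension vector `d` admits a subrepresentation of dimension vector `e`. -/
def GenericSub (e d : Q0 → ℕ) : Prop :=
  e ≤ d ∧ ∀ M : QRep k s t, M.dimVec = d →
    ∃ U : ∀ i, Submodule k (M.V i), M.IsSubrep U ∧ M.subDim U = e

variable [Fintype Q0]

/-- The semistable cone of `d`: stability parameters orthogonal to `d` admitting a
semistable representation of dimension vector `d`. -/
def SstCone (d : Q0 → ℕ) : Set (Q0 → ℝ) :=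
  {θ | QRep.pair θ d = 0 ∧ ∃ M : QRep k s t, M.dimVec = d ∧ QRep.Semistable θ M}

/-- The wall `W_e`: parameters `θ` orthogonal to `d` and `e` such that some `θ`-semistable
representation of dimension vector `d` has a subrepresentation of dimension vector `e`. -/
def Wall (d e : Q0 → ℕ) : Set (Q0 → ℝ) :=
  {θ | QRep.pair θ d = 0 ∧ QRep.pair θ e = 0 ∧
    ∃ (M : QRep k s t) (U : ∀ i, Submodule k (M.V i)),
      M.dimVec = d ∧ M.IsSubrep U ∧ M.subDim U = e ∧ QRep.Semistable θ M}

/-- GIT equivalence of stability parameters: equal semistable loci. -/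
def GITEquiv (d : Q0 → ℕ) (θ η : Q0 → ℝ) : Prop :=
  ∀ M : QRep k s t, M.dimVec = d → (QRep.Semistable θ M ↔ QRep.Semistable η M)

end Defs

/-- The hyperplane `H_e` inside the stability space of `d`. -/
def Hset {Q0 : Type} [Fintype Q0] (d e : Q0 → ℕ) : Set (Q0 → ℝ) :=
  {θ | QRep.pair θ d = 0 ∧ QRep.pair θ e = 0}

section Euler

variable {Q0 Q1 : Type} [Fintype Q0] [Fintype Q1]

/-- The Euler form of the quiver. -/
def euler (s t : Q1 → Q0) (x y : Q0 → ℤ) : ℤ :=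
  (∑ i, x i * y i) - ∑ a, x (s a) * y (t a)

/-- `ext(d, e)`: the maximum of `−⟨d', e⟩` over generic subdimension vectors `d' ↪ d`. -/
noncomputable def extGen (k : Type) [Field k] (s t : Q1 → Q0) (d e : Q0 → ℕ) : ℤ :=
  sSup {z : ℤ | ∃ d' : Q0 → ℕ, GenericSub k s t d' d ∧
    z = -(euler s t (fun i => (d' i : ℤ)) (fun i => (e i : ℤ)))}

end Euler

section Schur

variable {Q0 Q1 : Type} (s t : Q1 → Q0)

/-- Coordinates on the representation space `Rep(Q, d)`. -/
def RepCoords (d : Q0 → ℕ) : Type := Σ a : Q1, Fin (d (t a)) × Fin (d (s a))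

/-- The representation associated to a point of the representation space. -/
def matToRep (k : Type) [Field k] (d : Q0 → ℕ)
    (m : ∀ a : Q1, Matrix (Fin (d (t a))) (Fin (d (s a))) k) : QRep k s t where
  V := fun i => Fin (d i) → k
  hom := fun a => Matrix.mulVecLin (m a)

/-- A nonzero representation is indecomposable if it is not a direct sum of two nonzero
subrepresentations. -/
def Indecomposable (k : Type) [Field k] (M : QRep k s t) : Prop :=
  (∃ i, Module.finrank k (M.V i) ≠ 0) ∧
    ¬ ∃ U W : ∀ i, Submodule k (M.V i), M.IsSubrep U ∧ M.IsSubrep W ∧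
        U ≠ (fun _ => ⊥) ∧ W ≠ (fun _ => ⊥) ∧ ∀ i, IsCompl (U i) (W i)

/-- `d` is a Schur root: a general representation of dimension vector `d` is indecomposable,
i.e. all representations outside the vanishing locus of some nonzero polynomial on the
representation space are indecomposable. -/
def IsSchurRoot (k : Type) [Field k] (d : Q0 → ℕ) : Prop :=
  ∃ p : MvPolynomial (RepCoords s t d) k, p ≠ 0 ∧
    ∀ m : ∀ a : Q1, Matrix (Fin (d (t a))) (Fin (d (s a))) k,
      MvPolynomial.eval (fun x => m x.1 x.2.1 x.2.2) p ≠ 0 →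
        Indecomposable s t k (matToRep s t k d m)

end Schur

/-!
Scaling `e` is bilinearity of the Euler form. For `m * ext(d, e) ≤ ext(m * d, e)` one needs that
`d' ↪ d` implies `m * d' ↪ m * d`. If all representations of dimension `d` have a
subrepresentation of dimension `d'`, then so does the generic one after a field extension, and by
generic smoothness, valid in characteristic zero, this subrepresentation `M'` of `M` satisfies
`Ext¹(M', M/M') = 0`. The vanishing passes to the `m`-th powers of `M'` and `M`. Conversely, when
`Ext¹(M', M/M')` vanishes, `M'` deforms to a formal subrepresentation along the line from `M` to any
`N` of the same dimension, and properness of the Grassmannian specialises it to a subrepresentation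
of `N`.

For the opposite inequality, a general `M` of dimension `d` has only subrepresentations of generic
dimension, and each subrepresentation of `M ^ m` is filtered with subquotients that are `m`
subrepresentations of `M`. Hence `-⟨-, e⟩` is at most `m * ext(d, e)` on the subrepresentations
of `M ^ m`, one of which has any prescribed generic subdimension vector of `m * d`.
-/

section MatRep

variable {Q0 Q1 : Type*} {s t : Q1 → Q0} {ι κ : Q0 → Type*} {R S : Type*}

/-- A representation of the quiver with source and target maps `s` and `t` on the free modules
`ι i → R`, given by one matrix per arrow. -/
abbrev MatRep (s t : Q1 → Q0) (ι : Q0 → Type*) (R : Type*) : Type _ :=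
  ∀ a, Matrix (ι (t a)) (ι (s a)) R

/-- The base change of a matrix representation along a ring homomorphism. -/
def MatRep.map [CommRing R] [CommRing S] (f : R →+* S) (M : MatRep s t ι R) : MatRep s t ι S :=
  fun a => (M a).map f

variable [∀ i, Fintype (ι i)] [∀ i, Fintype (κ i)] [∀ i, DecidableEq (κ i)]
  [CommRing R] [CommRing S]

/-- A subrepresentation of `M` whose inclusions are split and which has bases indexed by `κ i`:
`incl i` holds the basis vectors, `retr i` is a left inverse of it, and invariance is expressed by
saying that `incl (t a) * retr (t a)` fixes the images under `M a` of the basis vectors. -/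
structure SplitSub (κ : Q0 → Type*) [∀ i, Fintype (κ i)] [∀ i, DecidableEq (κ i)]
    (M : MatRep s t ι R) where
  incl : ∀ i, Matrix (ι i) (κ i) R
  retr : ∀ i, Matrix (κ i) (ι i) R
  retr_mul_incl : ∀ i, retr i * incl i = 1
  incl_mul_retr_mul : ∀ a, incl (t a) * (retr (t a) * (M a * incl (s a))) = M a * incl (s a)

namespace SplitSub

variable {M : MatRep s t ι R}

/-- The subrepresentation, as a matrix representation in the basis given by `incl`. -/
def arrow (U : SplitSub κ M) : MatRep s t κ R :=
  fun a => U.retr (t a) * (M a * U.incl (s a))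

theorem mul_incl (U : SplitSub κ M) (a : Q1) :
    M a * U.incl (s a) = U.incl (t a) * U.arrow a :=
  (U.incl_mul_retr_mul a).symm

/-- The split subrepresentation with basis vectors `P`, retractions `Q` and structure
matrices `X`. -/
def ofArrow (P : ∀ i, Matrix (ι i) (κ i) R) (Q : ∀ i, Matrix (κ i) (ι i) R)
    (X : MatRep s t κ R) (hQP : ∀ i, Q i * P i = 1)
    (hMP : ∀ a, M a * P (s a) = P (t a) * X a) : SplitSub κ M where
  incl := P
  retr := Q
  retr_mul_incl := hQP
  incl_mul_retr_mul a := by rw [hMP, ← Matrix.mul_assoc (Q _), hQP, Matrix.one_mul]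

/-- The base change of a split subrepresentation along a ring homomorphism. -/
def map (U : SplitSub κ M) (f : R →+* S) : SplitSub κ (M.map f) where
  incl i := (U.incl i).map f
  retr i := (U.retr i).map f
  retr_mul_incl i := by
    rw [← Matrix.map_mul, U.retr_mul_incl, Matrix.map_one f (map_zero f) (map_one f)]
  incl_mul_retr_mul a := by
    simp only [MatRep.map, ← Matrix.map_mul, U.incl_mul_retr_mul]

/-- A split subrepresentation over a product of rings, assembled from its components. -/
def pi {J : Type*} {R : J → Type*} [∀ j, CommRing (R j)] {M : MatRep s t ι (∀ j, R j)}
    (U : ∀ j, SplitSub κ (M.map (Pi.evalRingHom R j))) : SplitSub κ M where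
  incl i := .of fun x y j => (U j).incl i x y
  retr i := .of fun x y j => (U j).retr i x y
  retr_mul_incl i := by
    ext x y j
    have := congr_fun₂ ((U j).retr_mul_incl i) x y
    simpa [Matrix.mul_apply, Matrix.one_apply, apply_ite (fun f : ∀ j, R j => f j)] using this
  incl_mul_retr_mul a := by
    ext x y j
    have := congr_fun₂ ((U j).incl_mul_retr_mul a) x y
    simpa [Matrix.mul_apply, MatRep.map] using this

theorem nonempty_of_forall_mem_range {f : R →+* S} (hf : Function.Injective f)
    (U : SplitSub κ (M.map f)) (hincl : ∀ i x y, U.incl i x y ∈ Set.range f)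
    (hretr : ∀ i x y, U.retr i x y ∈ Set.range f) : Nonempty (SplitSub κ M) := by
  choose P hP using hincl
  choose Q hQ using hretr
  have hP' (i) : (Matrix.of (P i)).map f = U.incl i := Matrix.ext (hP i)
  have hQ' (i) : (Matrix.of (Q i)).map f = U.retr i := Matrix.ext (hQ i)
  refine ⟨⟨fun i => .of (P i), fun i => .of (Q i), fun i => Matrix.map_injective hf ?_,
    fun a => Matrix.map_injective hf ?_⟩⟩
  · simp only [Matrix.map_mul, hP', hQ', U.retr_mul_incl,
      Matrix.map_one f (map_zero f) (map_one f)]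
  · simp only [Matrix.map_mul, hP', hQ']
    exact U.incl_mul_retr_mul a

theorem exists_finiteType_subalgebra [Algebra R S] [Finite Q0]
    (U : SplitSub κ (M.map (algebraMap R S))) :
    ∃ B : Subalgebra R S, Algebra.FiniteType R B ∧
      Nonempty (SplitSub κ (M.map (algebraMap R B))) := by
  let entries : (Σ i, (ι i × κ i) ⊕ (κ i × ι i)) → S := fun p =>
    p.2.elim (fun q => U.incl p.1 q.1 q.2) (fun q => U.retr p.1 q.1 q.2)
  let B := Algebra.adjoin R (Set.range entries)
  have hB (p) : entries p ∈ B := Algebra.subset_adjoin (Set.mem_range_self p)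
  refine ⟨B, B.fg_iff_finiteType.1 (Subalgebra.fg_def.2 ⟨_, Set.finite_range _, rfl⟩), ?_⟩
  let U' : SplitSub κ ((M.map (algebraMap R B)).map (B.val : B →+* S)) := U
  exact U'.nonempty_of_forall_mem_range Subtype.val_injective
    (fun i x y => ⟨⟨_, hB ⟨i, .inl (x, y)⟩⟩, rfl⟩) (fun i x y => ⟨⟨_, hB ⟨i, .inr (x, y)⟩⟩, rfl⟩)

end SplitSub

theorem nonempty_algHom_of_isAlgClosed (L B : Type*) [Field L] [IsAlgClosed L] [CommRing B]
    [Nontrivial B] [Algebra L B] [Algebra.FiniteType L B] : Nonempty (B →ₐ[L] L) := by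
  obtain ⟨m, hm⟩ := Ideal.exists_maximal B
  let _ : Field (B ⧸ m) := Ideal.Quotient.field m
  have : Module.Finite L (B ⧸ m) := finite_of_finite_type_of_isJacobsonRing L _
  let point : B ⧸ m →ₐ[L] L := IsAlgClosed.lift
  exact ⟨point.comp (Ideal.Quotient.mkₐ L m)⟩

open TensorProduct in
theorem nonempty_algHom_of_faithfulSMul (R B L : Type*) [CommRing R] [CommRing B] [Field L]
    [Algebra R B] [Algebra R L] [FaithfulSMul R B] [FaithfulSMul R L] [Algebra.FiniteType R B]
    [IsAlgClosed L] : Nonempty (B →ₐ[R] L) := by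
  have : IsDomain R := (FaithfulSMul.algebraMap_injective R L).isDomain _
  let _ : Algebra (FractionRing R) L := FractionRing.liftAlgebra R L
  have : Module.Flat R L := .trans R (FractionRing R) L
  have : Nontrivial (L ⊗[R] B) :=
    Algebra.TensorProduct.nontrivial_of_algebraMap_injective_of_flat_left R L B
      (FaithfulSMul.algebraMap_injective R B)
  obtain ⟨point⟩ := nonempty_algHom_of_isAlgClosed L (L ⊗[R] B)
  exact ⟨(point.restrictScalars R).comp Algebra.TensorProduct.includeRight⟩

theorem SplitSub.nonempty_map_of_faithfulSMul {Q0 Q1 : Type*} [Finite Q0] {s t : Q1 → Q0}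
    {ι κ : Q0 → Type*} [∀ i, Fintype (ι i)] [∀ i, Fintype (κ i)] [∀ i, DecidableEq (κ i)]
    {R C L : Type*} [CommRing R] [CommRing C] [Algebra R C] [FaithfulSMul R C]
    [Field L] [IsAlgClosed L] [Algebra R L] [FaithfulSMul R L] {M : MatRep s t ι R}
    (U : SplitSub κ (M.map (algebraMap R C))) : Nonempty (SplitSub κ (M.map (algebraMap R L))) := by
  obtain ⟨B, _, ⟨W⟩⟩ := U.exists_finiteType_subalgebra
  have : FaithfulSMul R B := .tower_bot R B C
  obtain ⟨f⟩ := nonempty_algHom_of_faithfulSMul R B L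
  have hf : (M.map (algebraMap R B)).map (f : B →+* L) = M.map (algebraMap R L) :=
    funext fun a => Matrix.ext fun x y => f.commutes (M a x y)
  exact ⟨hf ▸ W.map (f : B →+* L)⟩

end MatRep

section Valuation

variable {m n : Type*} [Fintype n] [DecidableEq n]

theorem det_mul_eq_sum_prod_mul_det_submatrix {R : Type*} [CommRing R] [Fintype m]
    (Q : Matrix n m R) (P : Matrix m n R) :
    (Q * P).det = ∑ J : n → m, (∏ j, Q j (J j)) * (P.submatrix J id).det := by
  classical
  have hrows : Q * P = fun j => ∑ i, Q j i • P i :=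
    funext fun j => funext fun l => by simp [Matrix.mul_apply]
  calc
    (Q * P).det = Matrix.detRowAlternating.toMultilinearMap fun j => ∑ i, Q j i • P i := by
      rw [hrows]; rfl
    _ = ∑ J : n → m, Matrix.detRowAlternating.toMultilinearMap fun j => Q j (J j) • P (J j) :=
      MultilinearMap.map_sum _ _
    _ = ∑ J : n → m, (∏ j, Q j (J j)) * (P.submatrix J id).det :=
      Finset.sum_congr rfl fun J _ => MultilinearMap.map_smul_univ _ _ _

theorem exists_det_submatrix_ne_zero {R : Type*} [CommRing R] [Nontrivial R] [Fintype m]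
    {Q : Matrix n m R} {P : Matrix m n R} (h : Q * P = 1) :
    ∃ J : n → m, (P.submatrix J id).det ≠ 0 := by
  by_contra! hJ
  have hdet := det_mul_eq_sum_prod_mul_det_submatrix Q P
  simp [h, hJ] at hdet

theorem mul_adjugate_submatrix_apply {R : Type*} [CommRing R] (P : Matrix m n R)
    (J : n → m) (i : m) (j : n) :
    (P * (P.submatrix J id).adjugate) i j = (P.submatrix (Function.update J j i) id).det := by
  have hrow : P.submatrix (Function.update J j i) id = (P.submatrix J id).updateRow j (P i) := by
    ext x y
    by_cases hx : x = j
    · subst hx; simp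
    · simp [hx]
  rw [hrow, ← Matrix.cramer_transpose_apply, Matrix.cramer_eq_adjugate_mulVec,
    ← Matrix.adjugate_transpose, Matrix.mulVec_transpose]
  rfl

-- Among the maximal minors of `P`, invert one of largest valuation: by Cramer's rule the entries
-- of the product are ratios of minors.
theorem exists_mul_inv_submatrix_mem [Finite m] {K : Type*} [Field K] (V : ValuationSubring K)
    {P : Matrix m n K} (hP : ∃ J : n → m, (P.submatrix J id).det ≠ 0) :
    ∃ J : n → m, IsUnit (P.submatrix J id).det ∧
      ∀ i j, (P * (P.submatrix J id)⁻¹) i j ∈ V := by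
  classical
  obtain ⟨J₀, hJ₀⟩ := hP
  have : Nonempty (n → m) := ⟨J₀⟩
  obtain ⟨J, hJ⟩ := Finite.exists_max fun J : n → m => V.valuation (P.submatrix J id).det
  have hpos : 0 < V.valuation (P.submatrix J id).det :=
    (zero_lt_iff.2 ((map_ne_zero _).2 hJ₀)).trans_le (hJ J₀)
  refine ⟨J, isUnit_iff_ne_zero.2 ((map_ne_zero _).1 hpos.ne'), fun i j => ?_⟩
  rw [← V.valuation_le_one_iff, Matrix.inv_def, Ring.inverse_eq_inv', Matrix.mul_smul,
    Matrix.smul_apply, mul_adjugate_submatrix_apply, smul_eq_mul, map_mul, map_inv₀,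
    inv_mul_le_one₀ hpos]
  exact hJ _

variable {Q0 Q1 : Type*} {s t : Q1 → Q0} {ι κ : Q0 → Type*} [∀ i, Fintype (ι i)]
  [∀ i, Fintype (κ i)] [∀ i, DecidableEq (κ i)]

namespace SplitSub

theorem nonempty_of_valuationSubring {K : Type*} [Field K] {V : ValuationSubring K}
    {M : MatRep s t ι V} (U : SplitSub κ (M.map V.subtype)) : Nonempty (SplitSub κ M) := by
  classical
  choose J hunit hmem using fun i =>
    exists_mul_inv_submatrix_mem V (exists_det_submatrix_ne_zero (U.retr_mul_incl i))
  let g (i : Q0) : Matrix (κ i) (κ i) K := (U.incl i).submatrix (J i) id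
  let rows (i : Q0) : Matrix (κ i) (ι i) K := (1 : Matrix (ι i) (ι i) K).submatrix (J i) id
  have hrows (i) : rows i * (U.incl i * (g i)⁻¹) = 1 := by
    rw [← Matrix.mul_assoc, ← Matrix.mul_nonsing_inv _ (hunit i)]
    congr 1
    ext x y
    simp [rows, Matrix.mul_apply, Matrix.one_apply]
  have hincl (a) : M.map V.subtype a * (U.incl (s a) * (g (s a))⁻¹) =
      U.incl (t a) * (g (t a))⁻¹ * (g (t a) * U.arrow a * (g (s a))⁻¹) := by
    rw [← Matrix.mul_assoc, U.mul_incl]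
    simp only [Matrix.mul_assoc]
    rw [Matrix.nonsing_inv_mul_cancel_left _ _ (hunit _)]
  refine (ofArrow _ rows _ hrows hincl).nonempty_of_forall_mem_range V.subtype_injective
    (fun i x y => ⟨⟨_, hmem i x y⟩, rfl⟩) fun i x y => ⟨if J i x = y then 1 else 0, ?_⟩
  by_cases hxy : J i x = y <;> simp [ofArrow, rows, Matrix.one_apply, hxy]

theorem nonempty_map_of_ker_eq [Finite Q0] {A C L : Type*} [CommRing A] [CommRing C] [Field L]
    [IsAlgClosed L] {f : A →+* C} {g : A →+* L} (hfg : RingHom.ker f = RingHom.ker g)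
    {M : MatRep s t ι A} (U : SplitSub κ (M.map f)) : Nonempty (SplitSub κ (M.map g)) := by
  let _ : Algebra (A ⧸ RingHom.ker g) L := (RingHom.kerLift g).toAlgebra
  let f' : A ⧸ RingHom.ker g →+* C := Ideal.Quotient.lift _ f fun a ha => by rwa [← hfg] at ha
  let _ : Algebra (A ⧸ RingHom.ker g) C := f'.toAlgebra
  have : FaithfulSMul (A ⧸ RingHom.ker g) L :=
    (faithfulSMul_iff_algebraMap_injective _ _).2 g.kerLift_injective
  have : FaithfulSMul (A ⧸ RingHom.ker g) C :=
    (faithfulSMul_iff_algebraMap_injective _ _).2 <|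
      RingHom.lift_injective_of_ker_le_ideal _ _ hfg.le
  let M' : MatRep s t ι (A ⧸ RingHom.ker g) := M.map (Ideal.Quotient.mk _)
  let U' : SplitSub κ (M'.map (algebraMap _ C)) := U
  exact U'.nonempty_map_of_faithfulSMul (L := L)

-- The Grassmannian is proper: a subrepresentation extends over a valuation ring of `K` that
-- dominates the local ring of `A` at the kernel of `g`.
theorem nonempty_map_of_injective [Finite Q0] {A K L : Type*} [CommRing A] [Field K] [Field L]
    [IsAlgClosed L] {f : A →+* K} (hf : Function.Injective f) (g : A →+* L) {M : MatRep s t ι A}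
    (U : SplitSub κ (M.map f)) : Nonempty (SplitSub κ (M.map g)) := by
  let p := RingHom.ker g
  have : p.IsPrime := RingHom.ker_isPrime g
  have hunit (y : p.primeCompl) : IsUnit (f y) := by
    refine isUnit_iff_ne_zero.2 fun h0 => y.2 ?_
    rw [(map_eq_zero_iff f hf).1 h0]
    exact zero_mem p
  let f' : Localization.AtPrime p →+* K := IsLocalization.lift hunit
  obtain ⟨V, hV, hlocal⟩ := IsLocalRing.exists_factor_valuationRing f'
  let h : A →+* V := (f'.codRestrict V.toSubring hV).comp (algebraMap A _)
  have hM : (M.map h).map V.subtype = M.map f :=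
    funext fun a => Matrix.ext fun x y => IsLocalization.lift_eq hunit (M a x y)
  obtain ⟨W⟩ := nonempty_of_valuationSubring (hM ▸ U : SplitSub κ ((M.map h).map V.subtype))
  refine nonempty_map_of_ker_eq (f := (IsLocalRing.residue V).comp h) ?_
    (W.map (IsLocalRing.residue V))
  ext a
  rw [RingHom.mem_ker, RingHom.comp_apply, IsLocalRing.residue_eq_zero_iff,
    IsLocalRing.mem_maximalIdeal, mem_nonunits_iff, RingHom.comp_apply]
  exact (isUnit_map_iff (f'.codRestrict V.toSubring hV) _).not.trans
    (not_iff_comm.1 (IsLocalization.AtPrime.isUnit_to_map_iff _ p a).symm)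

end SplitSub

end Valuation

section Deformation

open Finset PowerSeries

theorem exists_eq_apply_of_forall_lt {E : Type*} [Nonempty E] {G : (ℕ → E) → ℕ → E}
    (hG : ∀ d z w, (∀ i < d, z i = w i) → G z d = G w d) : ∃ z, ∀ d, z d = G z d := by
  let step (d : ℕ) (z : ∀ i < d, E) : E :=
    G (fun i => if h : i < d then z i h else Classical.arbitrary E) d
  refine ⟨Nat.lt_wfRel.wf.fix step, fun d => ?_⟩
  rw [WellFounded.fix_eq]
  exact hG d _ _ fun i hi => dif_pos hi

variable {m n l R : Type*} [CommRing R]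

/-- The matrix of power series whose coefficient matrices are the terms of `A`. -/
def matrixSeries (A : ℕ → Matrix m n R) : Matrix m n R⟦X⟧ :=
  .of fun i j => .mk fun d => A d i j

theorem matrixSeries_add (A B : ℕ → Matrix m n R) :
    matrixSeries (fun d => A d + B d) = matrixSeries A + matrixSeries B :=
  rfl

theorem matrixSeries_sub (A B : ℕ → Matrix m n R) :
    matrixSeries (fun d => A d - B d) = matrixSeries A - matrixSeries B :=
  rfl

theorem map_C_mul_matrixSeries [Fintype n] (M : Matrix m n R) (A : ℕ → Matrix n l R) :
    M.map C * matrixSeries A = matrixSeries fun d => M * A d := by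
  ext i j d
  simp [matrixSeries, Matrix.mul_apply]

theorem matrixSeries_mul_map_C [Fintype n] (A : ℕ → Matrix m n R) (M : Matrix n l R) :
    matrixSeries A * M.map C = matrixSeries fun d => A d * M := by
  ext i j d
  simp [matrixSeries, Matrix.mul_apply]

theorem matrixSeries_mul [Fintype n] (A : ℕ → Matrix m n R) (B : ℕ → Matrix n l R) :
    matrixSeries A * matrixSeries B =
      matrixSeries fun d => ∑ p ∈ antidiagonal d, A p.1 * B p.2 := by
  ext i j d
  simp only [matrixSeries, Matrix.mul_apply, Matrix.of_apply, map_sum, coeff_mul, coeff_mk,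
    Matrix.sum_apply]
  exact sum_comm

theorem matrixSeries_eq_add_X_smul (A : ℕ → Matrix m n R) :
    matrixSeries A = (A 0).map C + (X : R⟦X⟧) • matrixSeries fun d => A (d + 1) := by
  ext i j d
  cases d <;> simp [matrixSeries, coeff_succ_X_mul]

theorem isUnit_det_of_map_constantCoeff_eq_one [Fintype n] [DecidableEq n]
    {A : Matrix n n R⟦X⟧} (hA : A.map constantCoeff = 1) : IsUnit A.det := by
  rw [isUnit_iff_constantCoeff, RingHom.map_det, RingHom.mapMatrix_apply, hA, Matrix.det_one]
  exact isUnit_one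

namespace SplitSub

variable {Q0 Q1 : Type*} {s t : Q1 → Q0} {ι κ : Q0 → Type*} [∀ i, Fintype (ι i)]
  [∀ i, Fintype (κ i)] [∀ i, DecidableEq (κ i)] {M : MatRep s t ι R}

/-- The vanishing of `Ext¹(M', M/M')` for the subrepresentation `M'` of `M` given by `U`, stated as
surjectivity of the linearisation of `(P, Y) ↦ M P - P Y` at the inclusion and the structure
matrices of `M'`. -/
def IsUnobstructed (U : SplitSub κ M) : Prop :=
  ∀ C : ∀ a, Matrix (ι (t a)) (κ (s a)) R, ∃ (A : ∀ i, Matrix (ι i) (κ i) R) (B : MatRep s t κ R),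
    ∀ a, M a * A (s a) = A (t a) * U.arrow a + U.incl (t a) * B a + C a

/-- The inhomogeneous terms of the linear equations for the coefficients of a power series
deformation of `U` to a subrepresentation of `M + X • N`. The families `A` and `B` deform `U.incl`
and `U.arrow`, and their `d`-th terms are the coefficients of `X ^ (d + 1)`. -/
def obstruction (U : SplitSub κ M) (N : MatRep s t ι R)
    (A : ℕ → ∀ i, Matrix (ι i) (κ i) R) (B : ℕ → MatRep s t κ R) :
    ℕ → ∀ a, Matrix (ι (t a)) (κ (s a)) R
  | 0, a => -(N a * U.incl (s a))
  | d + 1, a => ∑ p ∈ antidiagonal d, A p.1 (t a) * B p.2 a - N a * A d (s a)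

theorem IsUnobstructed.exists_seq {U : SplitSub κ M} (hU : U.IsUnobstructed)
    (N : MatRep s t ι R) : ∃ A B, ∀ d a,
      M a * A d (s a) = A d (t a) * U.arrow a + U.incl (t a) * B d a + U.obstruction N A B d a := by
  choose A B hAB using hU
  let G (z : ℕ → (∀ i, Matrix (ι i) (κ i) R) × MatRep s t κ R) (d : ℕ) :=
    U.obstruction N (fun i => (z i).1) (fun i => (z i).2) d
  have hG (d z w) (h : ∀ i < d, z i = w i) : G z d = G w d := by
    cases d with
    | zero => rfl
    | succ d =>
      have hlt {p : ℕ × ℕ} (hp : p ∈ antidiagonal d) : p.1 < d + 1 ∧ p.2 < d + 1 := by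
        rw [HasAntidiagonal.mem_antidiagonal] at hp; omega
      funext a
      simp only [G, obstruction, h d d.lt_succ_self]
      congr 1
      exact sum_congr rfl fun p hp => by rw [h _ (hlt hp).1, h _ (hlt hp).2]
  obtain ⟨z, hz⟩ := exists_eq_apply_of_forall_lt (G := fun z d => (A (G z d), B (G z d)))
    fun d z w h => by simp only [hG d z w h]
  refine ⟨fun d => (z d).1, fun d => (z d).2, fun d a => ?_⟩
  simp only [hz d]
  exact hAB _ _

theorem matrixSeries_obstruction (U : SplitSub κ M) (N : MatRep s t ι R)
    (A : ℕ → ∀ i, Matrix (ι i) (κ i) R) (B : ℕ → MatRep s t κ R) (a : Q1) :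
    matrixSeries (U.obstruction N A B · a) =
      -((N a).map C * (U.incl (s a)).map C) + (X : R⟦X⟧) •
        (matrixSeries (A · (t a)) * matrixSeries (B · a) -
          (N a).map C * matrixSeries (A · (s a))) := by
  rw [matrixSeries_eq_add_X_smul, matrixSeries_mul, map_C_mul_matrixSeries, ← matrixSeries_sub,
    ← Matrix.map_mul, ← Matrix.map_neg C (map_neg C)]
  rfl

theorem IsUnobstructed.nonempty_map_C_add {U : SplitSub κ M} (hU : U.IsUnobstructed)
    (N : MatRep s t ι R) :
    Nonempty (SplitSub κ (M.map C + (X : R⟦X⟧) • N.map C)) := by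
  obtain ⟨A, B, hAB⟩ := hU.exists_seq N
  let P (i) := (U.incl i).map C + (X : R⟦X⟧) • matrixSeries fun d => A d i
  let Y (a) := (U.arrow a).map C + (X : R⟦X⟧) • matrixSeries fun d => B d a
  have hunit (i) : IsUnit ((U.retr i).map C * P i).det := by
    refine isUnit_det_of_map_constantCoeff_eq_one ?_
    have hP : (P i).map constantCoeff = U.incl i := by
      ext x y; simp [P]
    have hQ : ((U.retr i).map C).map (constantCoeff (R := R)) = U.retr i := by
      ext x y; simp
    rw [Matrix.map_mul, hP, hQ, U.retr_mul_incl]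
  have hseries (a) : (M a).map C * matrixSeries (A · (s a)) =
      matrixSeries (A · (t a)) * (U.arrow a).map C + (U.incl (t a)).map C * matrixSeries (B · a) +
        (-((N a).map C * (U.incl (s a)).map C) + (X : R⟦X⟧) •
          (matrixSeries (A · (t a)) * matrixSeries (B · a) -
            (N a).map C * matrixSeries (A · (s a)))) := by
    rw [← matrixSeries_obstruction, map_C_mul_matrixSeries, matrixSeries_mul_map_C,
      map_C_mul_matrixSeries, ← matrixSeries_add, ← matrixSeries_add]
    simp only [hAB]
  refine ⟨ofArrow P (fun i => ((U.retr i).map C * P i)⁻¹ * (U.retr i).map C) Y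
    (fun i => ?_) fun a => ?_⟩
  · rw [Matrix.mul_assoc, Matrix.nonsing_inv_mul _ (hunit i)]
  · have hMP : (M a).map C * (U.incl (s a)).map (C (R := R)) =
        (U.incl (t a)).map C * (U.arrow a).map C := by
      rw [← Matrix.map_mul, U.mul_incl, Matrix.map_mul]
    simp only [Pi.add_apply, Pi.smul_apply, MatRep.map, P, Y, Matrix.mul_add, Matrix.add_mul,
      Matrix.mul_smul, Matrix.smul_mul, hMP, hseries, smul_add, smul_sub, smul_neg]
    abel

-- The line through `M` and `N` carries a subrepresentation near `M`, hence over its generic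
-- point, hence at `N`.
theorem IsUnobstructed.nonempty_splitSub [Finite Q0] {L : Type*} [Field L] [IsAlgClosed L]
    {M : MatRep s t ι L} {U : SplitSub κ M} (hU : U.IsUnobstructed) (N : MatRep s t ι L) :
    Nonempty (SplitSub κ N) := by
  obtain ⟨W⟩ := hU.nonempty_map_C_add (N - M)
  let line : MatRep s t ι (Polynomial L) :=
    M.map Polynomial.C + (Polynomial.X : Polynomial L) • (N - M).map Polynomial.C
  let toFrac : Polynomial L →+* FractionRing L⟦X⟧ :=
    (algebraMap L⟦X⟧ _).comp Polynomial.coeToPowerSeries.ringHom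
  have htoFrac : Function.Injective toFrac :=
    (IsFractionRing.injective L⟦X⟧ _).comp (Polynomial.coe_injective L)
  have hline : line.map toFrac =
      (M.map C + (X : L⟦X⟧) • (N - M).map C).map (algebraMap L⟦X⟧ (FractionRing L⟦X⟧)) := by
    ext a x y
    simp [line, toFrac, MatRep.map]
  have heval : line.map (Polynomial.evalRingHom 1) = N := by
    ext a x y
    simp [line, MatRep.map]
  exact heval ▸ nonempty_map_of_injective htoFrac (Polynomial.evalRingHom 1)
    (hline ▸ W.map (algebraMap L⟦X⟧ (FractionRing L⟦X⟧)))

theorem IsUnobstructed.nonempty_splitSub_of_algebra [Finite Q0] {k L : Type*} [Field k]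
    [IsAlgClosed k] [Field L] [IsAlgClosed L] [Algebra k L] {M : MatRep s t ι L}
    {U : SplitSub κ M} (hU : U.IsUnobstructed) (N : MatRep s t ι k) : Nonempty (SplitSub κ N) := by
  obtain ⟨W⟩ := hU.nonempty_splitSub (N.map (algebraMap k L))
  exact nonempty_map_of_injective (algebraMap k L).injective (RingHom.id k) W

end SplitSub

end Deformation

section Generic

open MvPolynomial

theorem exists_derivation_algebraMap_X_eq {k σ L : Type*} [CommRing k] [CommRing L] [Algebra k L]
    [Algebra (MvPolynomial σ k) L] [IsScalarTower k (MvPolynomial σ k) L]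
    [Algebra.FormallyEtale (MvPolynomial σ k) L] (v : σ → L) :
    ∃ D : Derivation k L L, ∀ j, D (algebraMap (MvPolynomial σ k) L (X j)) = v j := by
  let D₀ : Derivation k (MvPolynomial σ k) L := mkDerivation k v
  let l := D₀.liftKaehlerDifferential.liftBaseChange L ∘ₗ
    (KaehlerDifferential.tensorKaehlerEquivOfFormallyEtale k (MvPolynomial σ k) L).symm.toLinearMap
  refine ⟨l.compDer (KaehlerDifferential.D k L), fun j => ?_⟩
  change l (KaehlerDifferential.D k L _) = v j
  rw [LinearMap.comp_apply, LinearEquiv.coe_coe,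
    KaehlerDifferential.tensorKaehlerEquivOfFormallyEtale_symm_D_algebraMap,
    LinearMap.liftBaseChange_tmul, one_smul, Derivation.liftKaehlerDifferential_comp_D]
  exact mkDerivation_X k v j

theorem map_mul_derivation {k L l m n : Type*} [CommRing k] [CommRing L] [Algebra k L] [Fintype m]
    (D : Derivation k L L) (A : Matrix l m L) (B : Matrix m n L) :
    (A * B).map D = A.map D * B + A * B.map D := by
  ext x y
  simp only [Matrix.map_apply, Matrix.mul_apply, Matrix.add_apply, map_sum, Derivation.leibniz,
    smul_eq_mul, ← Finset.sum_add_distrib]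
  exact Finset.sum_congr rfl fun j _ => by ring

variable {Q0 Q1 : Type*} {s t : Q1 → Q0} {ι κ : Q0 → Type*} {k : Type*}

/-- The point of the representation space defined by `M`, for evaluating polynomials at `M`. -/
def MatRep.coords (M : MatRep s t ι k) (j : Σ a, ι (t a) × ι (s a)) : k :=
  M j.1 j.2.1 j.2.2

/-- The universal matrix representation, whose entries are independent variables. -/
noncomputable def genericRep (k : Type*) [CommRing k] (s t : Q1 → Q0) (ι : Q0 → Type*) :
    MatRep s t ι (MvPolynomial (Σ a, ι (t a) × ι (s a)) k) :=
  fun a => .of fun x y => X ⟨a, x, y⟩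

theorem genericRep_map_eval [CommRing k] (M : MatRep s t ι k) :
    (genericRep k s t ι).map (eval M.coords) = M :=
  funext fun _ => Matrix.ext fun _ _ => eval_X _

theorem MatRep.exists_eval_coords_ne_zero [CommRing k] [IsDomain k] [Infinite k]
    {f : MvPolynomial (Σ a, ι (t a) × ι (s a)) k} (hf : f ≠ 0) :
    ∃ M : MatRep s t ι k, eval M.coords f ≠ 0 := by
  by_contra! h
  exact hf (MvPolynomial.funext fun x => h fun a => .of fun p q => x ⟨a, p, q⟩)

variable [∀ i, Fintype (ι i)] [∀ i, Fintype (κ i)] [∀ i, DecidableEq (κ i)]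

namespace SplitSub

-- Generic smoothness: differentiating `M P = P Y` along a derivation of `L` that moves the
-- generic matrix coefficients in a prescribed direction solves the linearised equation.
theorem isUnobstructed_of_formallyEtale [CommRing k] {L : Type*} [CommRing L] [Algebra k L]
    [Algebra (MvPolynomial (Σ a, ι (t a) × ι (s a)) k) L]
    [IsScalarTower k (MvPolynomial (Σ a, ι (t a) × ι (s a)) k) L]
    [Algebra.FormallyEtale (MvPolynomial (Σ a, ι (t a) × ι (s a)) k) L]
    (U : SplitSub κ ((genericRep k s t ι).map (algebraMap _ L))) : U.IsUnobstructed := by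
  intro C
  obtain ⟨D, hD⟩ := exists_derivation_algebraMap_X_eq (k := k)
    fun j : Σ a, ι (t a) × ι (s a) => -(C j.1 * U.retr (s j.1)) j.2.1 j.2.2
  have hgeneric (a) : ((genericRep k s t ι).map (algebraMap _ L) a).map D =
      -(C a * U.retr (s a)) :=
    Matrix.ext fun x y => hD ⟨a, x, y⟩
  refine ⟨fun i => (U.incl i).map D, fun a => (U.arrow a).map D, fun a => ?_⟩
  have hleibniz := congrArg (Matrix.map · D) (U.mul_incl a)
  simp only [map_mul_derivation, hgeneric] at hleibniz
  rw [← hleibniz, Matrix.neg_mul, Matrix.mul_assoc, U.retr_mul_incl, Matrix.mul_one]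
  abel

theorem nonempty_genericRep_of_dense [Finite Q0] [CommRing k] {L : Type*} [Field L] [IsAlgClosed L]
    [Algebra (MvPolynomial (Σ a, ι (t a) × ι (s a)) k) L]
    [FaithfulSMul (MvPolynomial (Σ a, ι (t a) × ι (s a)) k) L]
    (hdense : ∀ f ≠ 0, ∃ M : MatRep s t ι k, Nonempty (SplitSub κ M) ∧ eval M.coords f ≠ 0) :
    Nonempty (SplitSub κ ((genericRep k s t ι).map (algebraMap _ L))) := by
  let J := {M : MatRep s t ι k // Nonempty (SplitSub κ M)}
  let evalAll : MvPolynomial (Σ a, ι (t a) × ι (s a)) k →+* (J → k) :=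
    RingHom.pi fun M => eval M.1.coords
  let _ : Algebra (MvPolynomial (Σ a, ι (t a) × ι (s a)) k) (J → k) := evalAll.toAlgebra
  have hinj : Function.Injective evalAll := by
    refine (injective_iff_map_eq_zero _).2 fun f hf => ?_
    by_contra hne
    obtain ⟨M, hM, hMf⟩ := hdense f hne
    exact hMf (congr_fun hf ⟨M, hM⟩)
  have : FaithfulSMul (MvPolynomial (Σ a, ι (t a) × ι (s a)) k) (J → k) :=
    (faithfulSMul_iff_algebraMap_injective _ _).2 hinj
  have hM (M : J) : ((genericRep k s t ι).map evalAll).map (Pi.evalRingHom _ M) = M.1 :=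
    genericRep_map_eval M.1
  let U : SplitSub κ ((genericRep k s t ι).map (algebraMap _ (J → k))) :=
    pi fun M => hM M ▸ M.2.some
  exact U.nonempty_map_of_faithfulSMul

theorem exists_isUnobstructed_of_dense [Finite Q0] [Field k] [CharZero k]
    (hdense : ∀ f ≠ 0, ∃ M : MatRep s t ι k, Nonempty (SplitSub κ M) ∧ eval M.coords f ≠ 0) :
    ∃ U : SplitSub κ ((genericRep k s t ι).map (algebraMap _
      (AlgebraicClosure (FractionRing (MvPolynomial (Σ a, ι (t a) × ι (s a)) k))))),
      U.IsUnobstructed := by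
  let S := MvPolynomial (Σ a, ι (t a) × ι (s a)) k
  let K := FractionRing S
  have : CharZero K := IsFractionRing.charZero S
  have : Algebra.FormallyEtale S K := .of_isLocalization (nonZeroDivisors S)
  have : Algebra.FormallyEtale K (AlgebraicClosure K) := .of_isSeparable _ _
  have : Algebra.FormallyEtale S (AlgebraicClosure K) := .comp S K _
  have : FaithfulSMul S (AlgebraicClosure K) := .trans S K _
  obtain ⟨U⟩ := nonempty_genericRep_of_dense (L := AlgebraicClosure K) hdense
  exact ⟨U, U.isUnobstructed_of_formallyEtale⟩

theorem nonempty_of_dense [Finite Q0] [Field k] [CharZero k] [IsAlgClosed k]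
    (hdense : ∀ f ≠ 0, ∃ M : MatRep s t ι k, Nonempty (SplitSub κ M) ∧ eval M.coords f ≠ 0)
    (N : MatRep s t ι k) : Nonempty (SplitSub κ N) := by
  obtain ⟨U, hU⟩ := exists_isUnobstructed_of_dense hdense
  exact hU.nonempty_splitSub_of_algebra N

end SplitSub

end Generic

section Power

open scoped Kronecker

theorem submatrix_one_kronecker_mul {l m n o q R : Type*} [CommSemiring R] [Fintype m] [Fintype n]
    [DecidableEq n] (M : Matrix l m R) (A : Matrix (n × m) o R) (p : n) (c : q → o) :
    ((1 : Matrix n n R) ⊗ₖ M * A).submatrix (Prod.mk p) c = M * A.submatrix (Prod.mk p) c := by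
  ext x y
  simp [Matrix.mul_apply, Fintype.sum_prod_type, Matrix.one_apply]

theorem submatrix_mul_one_kronecker {l m n o q R : Type*} [CommSemiring R] [Fintype m] [Fintype n]
    [DecidableEq n] (A : Matrix o (n × m) R) (M : Matrix m l R) (r : q → o) (p : n) :
    (A * (1 : Matrix n n R) ⊗ₖ M).submatrix r (Prod.mk p) = A.submatrix r (Prod.mk p) * M := by
  ext x y
  simp [Matrix.mul_apply, Fintype.sum_prod_type, Matrix.one_apply]

theorem matrix_ext_of_submatrix_prodMk {l m n o R : Type*} {A B : Matrix (l × m) (n × o) R}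
    (h : ∀ p q, A.submatrix (Prod.mk p) (Prod.mk q) = B.submatrix (Prod.mk p) (Prod.mk q)) :
    A = B :=
  Matrix.ext fun x y => congr_fun₂ (h x.1 y.1) x.2 y.2

variable {Q0 Q1 : Type*} {s t : Q1 → Q0} {ι κ : Q0 → Type*} {R : Type*} [CommRing R]
  (n : Type*) [DecidableEq n]

/-- The direct sum of copies of a matrix representation indexed by `n`. -/
def MatRep.power (M : MatRep s t ι R) : MatRep s t (fun i => n × ι i) R :=
  fun a => (1 : Matrix n n R) ⊗ₖ M a

variable [Fintype n] [∀ i, Fintype (ι i)] [∀ i, Fintype (κ i)] [∀ i, DecidableEq (κ i)]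

namespace SplitSub

/-- The direct sum of copies of a split subrepresentation indexed by `n`. -/
def power {M : MatRep s t ι R} (U : SplitSub κ M) :
    SplitSub (fun i => n × κ i) (M.power n) :=
  ofArrow (fun i => 1 ⊗ₖ U.incl i) (fun i => 1 ⊗ₖ U.retr i) (U.arrow.power n)
    (fun i => by rw [← Matrix.mul_kronecker_mul, U.retr_mul_incl, mul_one,
      Matrix.one_kronecker_one])
    (fun a => by simp only [MatRep.power, ← Matrix.mul_kronecker_mul, U.mul_incl])

theorem power_incl {M : MatRep s t ι R} (U : SplitSub κ M) (i : Q0) :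
    (U.power n).incl i = (1 : Matrix n n R) ⊗ₖ U.incl i :=
  rfl

theorem power_arrow {M : MatRep s t ι R} (U : SplitSub κ M) :
    (U.power n).arrow = U.arrow.power n := by
  ext1 a
  simp only [arrow, power, ofArrow, MatRep.power, ← Matrix.mul_kronecker_mul, one_mul]

theorem IsUnobstructed.power {M : MatRep s t ι R} {U : SplitSub κ M} (hU : U.IsUnobstructed) :
    (U.power n).IsUnobstructed := by
  intro C
  choose A B hAB using fun p q : n => hU fun a => (C a).submatrix (Prod.mk p) (Prod.mk q)
  refine ⟨fun i => .of fun x y => A x.1 y.1 i x.2 y.2, fun a => .of fun x y => B x.1 y.1 a x.2 y.2,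
    fun a => ?_⟩
  refine matrix_ext_of_submatrix_prodMk fun p q => ?_
  simp only [power_incl, power_arrow, MatRep.power, Matrix.submatrix_add, Pi.add_apply,
    submatrix_one_kronecker_mul, submatrix_mul_one_kronecker]
  exact hAB p q a

theorem nonempty_power_of_forall [Finite Q0] {k : Type*} [Field k] [CharZero k]
    [IsAlgClosed k] (h : ∀ M : MatRep s t ι k, Nonempty (SplitSub κ M))
    (N : MatRep s t (fun i => n × ι i) k) : Nonempty (SplitSub (fun i => n × κ i) N) := by
  obtain ⟨U, hU⟩ := exists_isUnobstructed_of_dense fun (f : MvPolynomial _ k) hf =>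
    (MatRep.exists_eval_coords_ne_zero hf).imp fun M hM => ⟨h M, hM⟩
  exact (hU.power n).nonempty_splitSub_of_algebra N

end SplitSub

end Power

section Bridge

variable {k : Type} [Field k] {Q0 Q1 : Type} {s t : Q1 → Q0} {ι κ : Q0 → Type*}
  [∀ i, Fintype (ι i)] [∀ i, DecidableEq (ι i)] [∀ i, Fintype (κ i)] [∀ i, DecidableEq (κ i)]

/-- The matrix representation describing `M` in a choice of bases. -/
noncomputable def QRep.toMatRep (M : QRep k s t) (b : ∀ i, Module.Basis (ι i) k (M.V i)) :
    MatRep s t ι k :=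
  fun a => LinearMap.toMatrix (b (s a)) (b (t a)) (M.hom a)

theorem QRep.IsSubrep.nonempty_splitSub {M : QRep k s t} {U : ∀ i, Submodule k (M.V i)}
    (hU : M.IsSubrep U) (b : ∀ i, Module.Basis (ι i) k (M.V i))
    (hκ : ∀ i, M.subDim U i = Fintype.card (κ i)) : Nonempty (SplitSub κ (M.toMatRep b)) := by
  let c (i) : Module.Basis (κ i) k (U i) :=
    (Module.finBasisOfFinrankEq k (U i) (hκ i)).reindex (Fintype.equivFin (κ i)).symm
  choose g hg using fun i => (U i).subtype.exists_leftInverse_of_injective (U i).ker_subtype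
  refine ⟨.ofArrow (fun i => LinearMap.toMatrix (c i) (b i) (U i).subtype)
    (fun i => LinearMap.toMatrix (b i) (c i) (g i)) ((M.subRep U hU).toMatRep c)
    (fun i => ?_) (fun a => ?_)⟩
  · rw [← LinearMap.toMatrix_comp, hg, LinearMap.toMatrix_id]
  · exact (LinearMap.toMatrix_comp (c (s a)) (b (s a)) (b (t a)) (M.hom a) (U (s a)).subtype).symm
      |>.trans (LinearMap.toMatrix_comp (c (s a)) (c (t a)) (b (t a)) (U (t a)).subtype
        ((M.hom a).restrict (hU a)))

theorem SplitSub.exists_isSubrep {M : QRep k s t} {b : ∀ i, Module.Basis (ι i) k (M.V i)}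
    (W : SplitSub κ (M.toMatRep b)) :
    ∃ U : ∀ i, Submodule k (M.V i), M.IsSubrep U ∧ ∀ i, M.subDim U i = Fintype.card (κ i) := by
  let e (i) : Module.Basis (κ i) k (κ i → k) := Pi.basisFun k (κ i)
  let incl (i) : (κ i → k) →ₗ[k] M.V i := Matrix.toLin (e i) (b i) (W.incl i)
  have hincl (i) : Function.Injective (incl i) := by
    have hretr : Matrix.toLin (b i) (e i) (W.retr i) ∘ₗ incl i = LinearMap.id := by
      rw [← Matrix.toLin_mul, W.retr_mul_incl, Matrix.toLin_one]
    exact Function.LeftInverse.injective (g := Matrix.toLin (b i) (e i) (W.retr i))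
      (LinearMap.congr_fun hretr)
  refine ⟨fun i => LinearMap.range (incl i), ?_, fun i => ?_⟩
  · rintro a _ ⟨y, rfl⟩
    have h := congrArg (Matrix.toLin (e (s a)) (b (t a))) (W.mul_incl a)
    rw [Matrix.toLin_mul _ (b (s a)), Matrix.toLin_mul _ (e (t a)), QRep.toMatRep,
      Matrix.toLin_toMatrix] at h
    exact ⟨_, (LinearMap.congr_fun h y).symm⟩
  · exact (LinearMap.finrank_range_of_inj (hincl i)).trans (Module.finrank_fintype_fun_eq_card k)

/-- The representation on the spaces of column vectors; `matToRep` is the case of the index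
types `Fin (d i)`. -/
def MatRep.toQRep {ι : Q0 → Type} [∀ i, Fintype (ι i)] (M : MatRep s t ι k) : QRep k s t where
  V i := ι i → k
  hom a := (M a).mulVecLin

theorem MatRep.dimVec_toQRep {ι : Q0 → Type} [∀ i, Fintype (ι i)] (M : MatRep s t ι k) :
    M.toQRep.dimVec = fun i => Fintype.card (ι i) :=
  funext fun _ => Module.finrank_fintype_fun_eq_card k

theorem MatRep.toMatRep_toQRep {ι : Q0 → Type} [∀ i, Fintype (ι i)] [∀ i, DecidableEq (ι i)]
    (M : MatRep s t ι k) : M.toQRep.toMatRep (fun i => Pi.basisFun k (ι i)) = M :=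
  funext fun a => LinearMap.toMatrix'_toLin' (M a)

theorem genericSub_iff_nonempty_splitSub {ι : Q0 → Type} [∀ i, Fintype (ι i)] {d d' : Q0 → ℕ}
    (hι : ∀ i, d i = Fintype.card (ι i)) (hκ : ∀ i, d' i = Fintype.card (κ i)) :
    GenericSub k s t d' d ↔ d' ≤ d ∧ ∀ M : MatRep s t ι k, Nonempty (SplitSub κ M) := by
  classical
  refine and_congr_right fun _ => ⟨fun h M => ?_, fun h M hM => ?_⟩
  · obtain ⟨U, hU, hUd⟩ := h M.toQRep (M.dimVec_toQRep.trans (funext fun i => (hι i).symm))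
    rw [← M.toMatRep_toQRep]
    exact hU.nonempty_splitSub _ fun i => by rw [hUd, hκ]
  · let b (i) : Module.Basis (ι i) k (M.V i) :=
      (Module.finBasisOfFinrankEq k (M.V i) ((congr_fun hM i).trans (hι i))).reindex
        (Fintype.equivFin (ι i)).symm
    obtain ⟨W⟩ := h (M.toMatRep b)
    obtain ⟨U, hU, hUd⟩ := W.exists_isSubrep
    exact ⟨U, hU, funext fun i => (hUd i).trans (hκ i).symm⟩

end Bridge

section GenericSub

open MvPolynomial

variable {k : Type} [Field k] {Q0 Q1 : Type} {s t : Q1 → Q0} {d d' : Q0 → ℕ}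

theorem GenericSub.zero : GenericSub k s t 0 d := by
  refine ⟨zero_le, fun M _ => ⟨fun _ => ⊥, fun a x hx => ?_, funext fun _ => finrank_bot k _⟩⟩
  rw [(Submodule.mem_bot k).1 hx, map_zero]
  exact zero_mem _

variable [Finite Q0] [CharZero k] [IsAlgClosed k]

theorem GenericSub.nsmul (h : GenericSub k s t d' d) (m : ℕ) :
    GenericSub k s t (m • d') (m • d) := by
  obtain ⟨hle, hsub⟩ := (genericSub_iff_nonempty_splitSub (ι := fun i => Fin (d i))
    (κ := fun i => Fin (d' i)) (by simp) (by simp)).1 h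
  exact (genericSub_iff_nonempty_splitSub (ι := fun i => Fin m × Fin (d i))
    (κ := fun i => Fin m × Fin (d' i)) (by simp) (by simp)).2
    ⟨nsmul_le_nsmul_right hle m, SplitSub.nonempty_power_of_forall (Fin m) hsub⟩

theorem exists_ne_zero_eval_eq_zero_of_not_genericSub (hle : d' ≤ d)
    (h : ¬ GenericSub k s t d' d) :
    ∃ f : MvPolynomial (Σ a, Fin (d (t a)) × Fin (d (s a))) k, f ≠ 0 ∧
      ∀ M : MatRep s t (fun i => Fin (d i)) k,
        Nonempty (SplitSub (fun i => Fin (d' i)) M) → eval M.coords f = 0 := by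
  by_contra! hdense
  exact h ((genericSub_iff_nonempty_splitSub (ι := fun i => Fin (d i))
    (κ := fun i => Fin (d' i)) (by simp) (by simp)).2
    ⟨hle, SplitSub.nonempty_of_dense hdense⟩)

theorem exists_dimVec_eq_forall_genericSub (k : Type) [Field k] [CharZero k] [IsAlgClosed k]
    (s t : Q1 → Q0) (d : Q0 → ℕ) :
    ∃ M : QRep k s t, M.dimVec = d ∧ ∀ U, M.IsSubrep U → GenericSub k s t (M.subDim U) d := by
  classical
  let _ := Fintype.ofFinite Q0
  let J := {d' : Q0 → ℕ // d' ≤ d ∧ ¬ GenericSub k s t d' d}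
  have : Finite J := ((Set.finite_Iic d).subset fun d' hd' => hd'.1).to_subtype
  let _ := Fintype.ofFinite J
  choose f hf hfM using fun d' : J => exists_ne_zero_eval_eq_zero_of_not_genericSub d'.2.1 d'.2.2
  obtain ⟨M, hM⟩ := MatRep.exists_eval_coords_ne_zero (s := s) (t := t) (ι := fun i => Fin (d i))
    (Finset.prod_ne_zero_iff.2 fun d' (_ : d' ∈ Finset.univ) => hf d')
  have hdim : M.toQRep.dimVec = d := M.dimVec_toQRep.trans (funext fun i => Fintype.card_fin _)
  refine ⟨M.toQRep, hdim, fun U hU => ?_⟩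
  by_contra hgen
  have hle : M.toQRep.subDim U ≤ d := fun i => (U i).finrank_le.trans_eq (congr_fun hdim i)
  have hsub : Nonempty (SplitSub (fun i => Fin (M.toQRep.subDim U i)) M) :=
    M.toMatRep_toQRep ▸ hU.nonempty_splitSub _ fun i => (Fintype.card_fin _).symm
  rw [map_prod, Finset.prod_ne_zero_iff] at hM
  exact hM ⟨_, hle, hgen⟩ (Finset.mem_univ _) (hfM _ M hsub)

end GenericSub

section DirectSum

theorem finrank_comap_inl_add_finrank_map_snd {k V W : Type*} [Field k] [AddCommGroup V]
    [Module k V] [AddCommGroup W] [Module k W] [FiniteDimensional k V] [FiniteDimensional k W]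
    (U : Submodule k (V × W)) :
    Module.finrank k (U.comap (LinearMap.inl k V W)) +
      Module.finrank k (U.map (LinearMap.snd k V W)) = Module.finrank k U := by
  have hker : Module.finrank k (LinearMap.ker ((LinearMap.snd k V W).domRestrict U)) =
      Module.finrank k (U.comap (LinearMap.inl k V W)) := by
    rw [LinearMap.ker_domRestrict, ← Submodule.finrank_map_subtype_eq,
      (Submodule.equivMapOfInjective (LinearMap.inl k V W) LinearMap.inl_injective _).finrank_eq,
      Submodule.map_comap_subtype, Submodule.map_comap_eq, LinearMap.range_inl, inf_comm]
  rw [← hker, ← LinearMap.range_domRestrict, add_comm, LinearMap.finrank_range_add_finrank_ker]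

variable {k : Type} [Field k] {Q0 Q1 : Type} {s t : Q1 → Q0}

namespace QRep

theorem dimVec_dsum (M N : QRep k s t) : (M.dsum N).dimVec = M.dimVec + N.dimVec :=
  funext fun i => Module.finrank_prod (R := k) (M := M.V i) (M' := N.V i)

theorem IsSubrep.exists_subDim_add_eq {M N : QRep k s t}
    {U : ∀ i, Submodule k ((M.dsum N).V i)} (hU : (M.dsum N).IsSubrep U) :
    ∃ U₁ U₂, M.IsSubrep U₁ ∧ N.IsSubrep U₂ ∧ M.subDim U₁ + N.subDim U₂ = (M.dsum N).subDim U := by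
  refine ⟨fun i => (U i).comap (LinearMap.inl k (M.V i) (N.V i)),
    fun i => (U i).map (LinearMap.snd k (M.V i) (N.V i)), fun a x hx => ?_, ?_,
    funext fun i => finrank_comap_inl_add_finrank_map_snd (U i)⟩
  · have hhom : (M.dsum N).hom a (x, 0) = (M.hom a x, 0) :=
      Prod.ext rfl (map_zero (N.hom a))
    have hmem := hU a (x, 0) hx
    rwa [hhom] at hmem
  · rintro a _ ⟨x, hx, rfl⟩
    exact ⟨_, hU a x hx, rfl⟩

theorem exists_dimVec_eq_nsmul {A : Type*} [AddCommMonoid A] [PartialOrder A]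
    [IsOrderedAddMonoid A] (φ : (Q0 → ℕ) →+ A) {c : A} (M : QRep k s t)
    (hM : ∀ U, M.IsSubrep U → φ (M.subDim U) ≤ c) (m : ℕ) :
    ∃ N : QRep k s t, N.dimVec = m • M.dimVec ∧ ∀ U, N.IsSubrep U → φ (N.subDim U) ≤ m • c := by
  induction m with
  | zero =>
    let N : QRep k s t := { V := fun _ => PUnit, hom := fun _ => 0 }
    have hV (i : Q0) : Subsingleton (N.V i) := inferInstanceAs (Subsingleton PUnit)
    refine ⟨N, ?_, fun U _ => ?_⟩
    · rw [zero_nsmul]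
      exact funext fun i => Module.finrank_zero_of_subsingleton (M := N.V i)
    · have hU : N.subDim U = 0 :=
        funext fun i => Module.finrank_zero_of_subsingleton (M := U i)
      rw [hU, map_zero, zero_nsmul]
  | succ m ih =>
    obtain ⟨N, hdim, hN⟩ := ih
    refine ⟨N.dsum M, by rw [dimVec_dsum, hdim, succ_nsmul], fun U hU => ?_⟩
    obtain ⟨U₁, U₂, hU₁, hU₂, hsum⟩ := hU.exists_subDim_add_eq
    rw [← hsum, map_add, succ_nsmul]
    exact add_le_add (hN U₁ hU₁) (hM U₂ hU₂)

end QRep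

end DirectSum

section Ext

variable {Q0 Q1 : Type} [Fintype Q0] [Fintype Q1] (k : Type) [Field k] (s t : Q1 → Q0)
  (d e : Q0 → ℕ)

/-- The functional `d' ↦ -⟨d', e⟩` whose maximum over generic subdimension vectors is `extGen`. -/
def negEuler : (Q0 → ℕ) →+ ℤ where
  toFun d' := -euler s t (fun i => d' i) (fun i => e i)
  map_zero' := by simp [euler]
  map_add' x y := by
    simp only [euler, Pi.add_apply, Nat.cast_add, add_mul, Finset.sum_add_distrib]
    ring

theorem negEuler_nsmul_right (m : ℕ) : negEuler s t (m • e) = m • negEuler s t e := by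
  ext1 d'
  simp only [negEuler, euler, AddMonoidHom.coe_mk, ZeroHom.coe_mk, Pi.smul_apply, smul_eq_mul,
    Nat.cast_mul, mul_left_comm _ (m : ℤ), ← Finset.mul_sum, AddMonoidHom.smul_apply, nsmul_eq_mul]
  ring

theorem isGreatest_extGen :
    IsGreatest (negEuler s t e '' {d' | GenericSub k s t d' d}) (extGen k s t d e) := by
  classical
  have hext : extGen k s t d e = sSup (negEuler s t e '' {d' | GenericSub k s t d' d}) := by
    simp only [extGen, Set.image, eq_comm, Set.mem_ofPred_eq]
    rfl
  have hbdd : BddAbove (negEuler s t e '' {d' | GenericSub k s t d' d}) :=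
    (((Set.finite_Iic d).subset fun _ h => h.1).image _).bddAbove
  rw [hext]
  exact ⟨Int.csSup_mem ⟨_, 0, .zero, rfl⟩ hbdd, fun _ => le_csSup hbdd⟩

theorem extGen_nsmul_right (m : ℕ) : extGen k s t d (m • e) = m • extGen k s t d e := by
  have hmono : Monotone fun z : ℤ => m • z := fun _ _ h => nsmul_le_nsmul_right h m
  have h := hmono.map_isGreatest (isGreatest_extGen k s t d e)
  rw [Set.image_image] at h
  refine (isGreatest_extGen k s t d (m • e)).unique ?_
  simpa only [negEuler_nsmul_right, AddMonoidHom.smul_apply] using h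

theorem extGen_nsmul_left [CharZero k] [IsAlgClosed k] (m : ℕ) :
    extGen k s t (m • d) e = m • extGen k s t d e := by
  apply le_antisymm
  · obtain ⟨d', hd', hext⟩ := (isGreatest_extGen k s t (m • d) e).1
    obtain ⟨M, hM, hgen⟩ := exists_dimVec_eq_forall_genericSub k s t d
    obtain ⟨N, hN, hle⟩ := M.exists_dimVec_eq_nsmul (negEuler s t e) (fun U hU =>
      (isGreatest_extGen k s t d e).2 ⟨_, hgen U hU, rfl⟩) m
    obtain ⟨U, hU, rfl⟩ := hd'.2 N (by rw [hN, hM])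
    exact hext ▸ hle U hU
  · obtain ⟨d', hd', hext⟩ := (isGreatest_extGen k s t d e).1
    rw [← hext, ← map_nsmul]
    exact (isGreatest_extGen k s t (m • d) e).2 ⟨_, hd'.nsmul m, rfl⟩

end Ext

/-- `k·ext(d, e) = ext(d, k·e) = ext(k·d, e)` for positive integers `k`. -/
theorem stmt7 (k : Type) [Field k] [IsAlgClosed k] [CharZero k]
    {Q0 Q1 : Type} [Fintype Q0] [Fintype Q1] (s t : Q1 → Q0) (d e : Q0 → ℕ)
    (m : ℕ) (hm : 0 < m) :
    (m : ℤ) * extGen k s t d e = extGen k s t d (fun i => m * e i) ∧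
      extGen k s t d (fun i => m * e i) = extGen k s t (fun i => m * d i) e := by
  exact ⟨(extGen_nsmul_right k s t d e m).symm, (extGen_nsmul_right k s t d e m).trans
    (extGen_nsmul_left k s t d e m).symm⟩
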